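/- arXiv:1412.2210 — 4 statements merged into one kernel-verified Lean document; each statement's English description precedes it below -/
import Mathlib

section
/- Stein's lemma: Let σ > 0 and let Y be a real random variable distributed as the centered Gaussian measure with variance σ² on ℝ. Let f : ℝ → ℝ be differentiable, and suppose that f' is integrable with respect to this Gaussian measure and that the function y ↦ y·f(y) is integrable with respect to this Gaussian measure. Then E[Y f(Y)] = σ² E[f'(Y)]. -/
open MeasureTheory ProbabilityTheory

/-!
Write `p` for the density of the Gaussian measure with mean `μ` and variance `v ≠ 0`. Since
`v p'(y) = -(y - μ) p(y)`, integrating `p f'` by parts over the whole line gives the identity. The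
boundary terms vanish as soon as `p f` is integrable, and this is automatic: `f` is locally
integrable, and away from a compact set `|f y| ≤ |(y - μ) f y|`.
-/

open Filter Bornology Asymptotics
open scoped NNReal

theorem integrable_of_integrable_smul_of_tendsto_cobounded {X 𝕜 E : Type*}
    [TopologicalSpace X] [SecondCountableTopology X] [MeasurableSpace X]
    [(cocompact X).IsMeasurablyGenerated] [NormedDivisionRing 𝕜] [NormedAddCommGroup E]
    [Module 𝕜 E] [NormSMulClass 𝕜 E]
    {ν : Measure X} {g : X → 𝕜} {f : X → E}
    (hf : LocallyIntegrable f ν) (hg : Tendsto g (cocompact X) (cobounded 𝕜))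
    (hgf : Integrable (fun x => g x • f x) ν) : Integrable f ν := by
  have one_le_norm : ∀ᶠ x in cocompact X, 1 ≤ ‖g x‖ :=
    (tendsto_norm_cobounded_atTop.comp hg).eventually_ge_atTop 1
  have f_isBigO : f =O[cocompact X] fun x => g x • f x := by
    refine .of_bound' (one_le_norm.mono fun x hx => ?_)
    rw [norm_smul]
    exact le_mul_of_one_le_left (norm_nonneg _) hx
  exact hf.integrable_of_isBigO_cocompact f_isBigO (hgf.integrableAtFilter _)

theorem hasDerivAt_gaussianPDFReal (μ : ℝ) (v : ℝ≥0) (x : ℝ) :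
    HasDerivAt (gaussianPDFReal μ v) (-((v : ℝ)⁻¹ * (gaussianPDFReal μ v x * (x - μ)))) x := by
  have exponent : HasDerivAt (fun y => -(y - μ) ^ 2 / (2 * (v : ℝ))) (-((v : ℝ)⁻¹ * (x - μ))) x :=
    (((((hasDerivAt_id' x).sub_const μ).pow 2).neg).div_const _).congr_deriv (by
      push_cast
      ring)
  refine (exponent.exp.const_mul (√(2 * Real.pi * v))⁻¹).congr_deriv ?_
  rw [gaussianPDFReal]
  ring

section NormedSpace

variable {E : Type*} [NormedAddCommGroup E] [NormedSpace ℝ E] {μ : ℝ} {v : ℝ≥0} {f f' : ℝ → E}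

theorem integrable_gaussianReal_iff_integrable_smul (hv : v ≠ 0) :
    Integrable f (gaussianReal μ v) ↔ Integrable fun x => gaussianPDFReal μ v x • f x := by
  simp only [gaussianReal_of_var_ne_zero _ hv, integrable_withDensity_iff_integrable_smul'
    (measurable_gaussianPDF μ v) (ae_of_all _ fun _ => gaussianPDF_lt_top), toReal_gaussianPDF]

theorem integrable_gaussianReal_of_integrable_sub_smul (hf : Continuous f)
    (hyf : Integrable (fun y => (y - μ) • f y) (gaussianReal μ v)) :
    Integrable f (gaussianReal μ v) := by
  have sub_tendsto : Tendsto (fun y => y - μ) (cocompact ℝ) (cobounded ℝ) := by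
    rw [Metric.cobounded_eq_cocompact]
    exact (Homeomorph.subRight μ).isClosedEmbedding.tendsto_cocompact
  exact integrable_of_integrable_smul_of_tendsto_cobounded hf.locallyIntegrable sub_tendsto hyf

theorem integral_gaussianPDFReal_smul_deriv (hv : v ≠ 0) (hf : ∀ x, HasDerivAt f (f' x) x)
    (hf' : Integrable f' (gaussianReal μ v))
    (hyf : Integrable (fun y => (y - μ) • f y) (gaussianReal μ v)) :
    ∫ y, gaussianPDFReal μ v y • f' y
      = (v : ℝ)⁻¹ • ∫ y, gaussianPDFReal μ v y • (y - μ) • f y := by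
  have f_integrable : Integrable f (gaussianReal μ v) :=
    integrable_gaussianReal_of_integrable_sub_smul
      (continuous_iff_continuousAt.2 fun x => (hf x).continuousAt) hyf
  rw [integrable_gaussianReal_iff_integrable_smul hv] at hf' hyf f_integrable
  have pdf_deriv_smul (y : ℝ) : (-((v : ℝ)⁻¹ * (gaussianPDFReal μ v y * (y - μ)))) • f y
      = -((v : ℝ)⁻¹ • gaussianPDFReal μ v y • (y - μ) • f y) := by
    simp only [neg_smul, mul_smul]
  have by_parts := integral_bilinear_hasDerivAt_right_eq_neg_left_of_integrable
    (L := ContinuousLinearMap.lsmul ℝ ℝ) (fun x _ => hasDerivAt_gaussianPDFReal μ v x)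
    (fun x _ => hf x) hf'
    (by simpa only [ContinuousLinearMap.lsmul_apply, pdf_deriv_smul] using (hyf.fun_smul _).fun_neg)
    f_integrable
  simpa only [ContinuousLinearMap.lsmul_apply, pdf_deriv_smul, integral_neg, integral_smul,
    neg_neg] using by_parts

theorem stein_lemma_general [CompleteSpace E] (hf : ∀ x, HasDerivAt f (f' x) x)
    (hf' : Integrable f' (gaussianReal μ v))
    (hyf : Integrable (fun y => (y - μ) • f y) (gaussianReal μ v)) :
    ∫ y, (y - μ) • f y ∂(gaussianReal μ v) = (v : ℝ) • ∫ y, f' y ∂(gaussianReal μ v) := by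
  rcases eq_or_ne v 0 with rfl | hv
  · simp only [gaussianReal_zero_var, integral_dirac, sub_self, NNReal.coe_zero, zero_smul]
  · simp only [integral_gaussianReal_eq_integral_smul hv]
    rw [integral_gaussianPDFReal_smul_deriv hv hf hf' hyf,
      smul_inv_smul₀ (NNReal.coe_ne_zero.2 hv)]

end NormedSpace

/-- **Stein's lemma.** If `f : ℝ → ℝ` is differentiable, its derivative is integrable with
respect to the centered Gaussian measure with variance `σ²`, and `y ↦ y * f y` is integrable
with respect to that measure, then `E[Y f(Y)] = σ² E[f'(Y)]` where `Y` is distributed as that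
Gaussian measure. -/
theorem stein_lemma (σ : ℝ) (hσ : 0 < σ) (f : ℝ → ℝ)
    (hf : Differentiable ℝ f)
    (hf' : Integrable (deriv f) (gaussianReal 0 ⟨σ ^ 2, sq_nonneg σ⟩))
    (hyf : Integrable (fun y => y * f y) (gaussianReal 0 ⟨σ ^ 2, sq_nonneg σ⟩)) :
    ∫ y, y * f y ∂(gaussianReal 0 ⟨σ ^ 2, sq_nonneg σ⟩)
      = σ ^ 2 * ∫ y, deriv f y ∂(gaussianReal 0 ⟨σ ^ 2, sq_nonneg σ⟩) := by
  simpa only [sub_zero] using! stein_lemma_general (fun x => (hf x).hasDerivAt) hf'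
    (by simpa only [sub_zero] using! hyf)
end

section
/- Multidimensional Stein identity: Let N be a positive integer, x ∈ ℝ^N a fixed (deterministic) vector, and let w be a random vector in ℝ^N whose N components are independent, each distributed as the centered Gaussian with variance σ² (σ > 0). Set y = x + w. Let f : ℝ^N → ℝ^N be differentiable everywhere, and assume that y ↦ ⟨x, f(y)⟩, y ↦ ⟨y, f(y)⟩, and y ↦ Σ_k ∂f_k/∂y_k (y) (the divergence of f, i.e., the trace of the Fréchet derivative of f) are all integrable with respect to the distribution of y. Then E[⟨x, f(y)⟩] = E[⟨y, f(y)⟩] − σ² E[Σ_k ∂f_k/∂y_k (y)]. -/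
open MeasureTheory ProbabilityTheory

open Filter Topology NNReal

/-!
Write the Gaussian density as `exp (-V)`. Since `div (exp (-V) • F) = exp (-V) * (div F - DV F)`,
the identity says that the total divergence of `exp (-V) • F` vanishes. For compactly supported
fields this is the divergence theorem on a large box. In general one truncates with `χ (V / m)` for
a bump function `χ`: along a cutoff depending on `V` alone, the error term is bounded by
a multiple of `exp (-V) * |DV F|`. The field `F = (v k * f k)` turns `DV F` into
`∑ k, (y k - x k) * f k`, which is integrable.
-/

section Divergence

variable {E E' : Type*} [NormedAddCommGroup E] [NormedSpace ℝ E]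
  [NormedAddCommGroup E'] [NormedSpace ℝ E']

/-- The divergence of a vector field, defined as the trace of its derivative so that it makes sense
without coordinates. -/
noncomputable def divergence (F : E → E) (z : E) : ℝ :=
  LinearMap.trace ℝ E (fderiv ℝ F z)

theorem divergence_eq_sum_fderiv_single {ι : Type*} [Fintype ι] [DecidableEq ι]
    (F : (ι → ℝ) → ι → ℝ) (z : ι → ℝ) :
    divergence F z = ∑ k, fderiv ℝ F z (Pi.single k 1) k := by
  simp [divergence, LinearMap.trace_eq_matrix_trace ℝ (Pi.basisFun ℝ ι), Matrix.trace]

theorem divergence_conj (e : E ≃L[ℝ] E') (F : E → E) (z : E') :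
    divergence (fun w => e (F (e.symm w))) z = divergence F (e.symm z) := by
  have hfderiv : fderiv ℝ (fun w => e (F (e.symm w))) z
      = (e : E →L[ℝ] E') ∘L fderiv ℝ F (e.symm z) ∘L (e.symm : E' →L[ℝ] E) := by
    rw [← e.symm.comp_right_fderiv (f := F), ← e.comp_fderiv]
    rfl
  rw [divergence, hfderiv]
  exact LinearMap.trace_conj' (fderiv ℝ F (e.symm z) : E →ₗ[ℝ] E) e.toLinearEquiv

theorem hasCompactSupport_divergence {F : E → E} (hF : HasCompactSupport F) :
    HasCompactSupport (divergence F) :=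
  (hF.fderiv (𝕜 := ℝ)).comp_left (g := fun A : E →L[ℝ] E => LinearMap.trace ℝ E A) (map_zero _)

variable [FiniteDimensional ℝ E]

theorem divergence_smul {g : E → ℝ} {F : E → E} {z : E} (hg : DifferentiableAt ℝ g z)
    (hF : DifferentiableAt ℝ F z) :
    divergence (fun w => g w • F w) z = g z * divergence F z + fderiv ℝ g z (F z) := by
  rw [divergence, fderiv_fun_smul hg hF]
  simp [divergence]

theorem measurable_divergence [MeasurableSpace E] [BorelSpace E] (F : E → E) :
    Measurable (divergence F) := by
  have : CompleteSpace E := FiniteDimensional.complete ℝ E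
  have hcont : Continuous fun A : E →L[ℝ] E => LinearMap.trace ℝ E A :=
    (LinearMap.trace ℝ E ∘ₗ ContinuousLinearMap.coeLM ℝ).continuous_of_finiteDimensional
  exact hcont.measurable.comp (measurable_fderiv ℝ F)

end Divergence

section DivergenceTheorem

theorem hasCompactSupport_comp_of_tendsto_cocompact {X Y Z : Type*} [TopologicalSpace X]
    [R1Space X] [TopologicalSpace Y] [R1Space Y] [Zero Z] {χ : Y → Z} {q : X → Y}
    (hχ : HasCompactSupport χ) (hq : Tendsto q (cocompact X) (cocompact Y)) :
    HasCompactSupport fun z => χ (q z) := by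
  rw [hasCompactSupport_iff_eventuallyEq, coclosedCompact_eq_cocompact] at hχ ⊢
  exact hq.eventually hχ

theorem fderiv_comp_const_mul_apply {E : Type*} [NormedAddCommGroup E] [NormedSpace ℝ E]
    {χ : ℝ → ℝ} {q : E → ℝ} {r : ℝ} {z : E} (hχ : DifferentiableAt ℝ χ (r * q z))
    (hq : DifferentiableAt ℝ q z) (u : E) :
    fderiv ℝ (fun w => χ (r * q w)) z u = r * deriv χ (r * q z) * fderiv ℝ q z u := by
  have hcomp : HasFDerivAt (fun w => χ (r * q w)) (deriv χ (r * q z) • r • fderiv ℝ q z) z :=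
    hχ.hasDerivAt.comp_hasFDerivAt z (hq.hasFDerivAt.const_mul r)
  rw [hcomp.fderiv, smul_smul, mul_comm (deriv χ _)]
  rfl

theorem integral_divergence_eq_zero_of_hasCompactSupport_pi {n : ℕ}
    {F : (Fin n → ℝ) → Fin n → ℝ} (hF : Differentiable ℝ F) (hsupp : HasCompactSupport F)
    (hdiv : Integrable (divergence F)) : ∫ z, divergence F z = 0 := by
  cases n with
  | zero => simp [divergence_eq_sum_fderiv_single]
  | succ n =>
    obtain ⟨M, hM, hball⟩ := (hsupp.isBounded.union
      (hasCompactSupport_divergence hsupp).isBounded).subset_ball_lt 0 0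
    have hF_zero (z : Fin (n + 1) → ℝ) (i : Fin (n + 1)) (hz : |z i| = M) : F z = 0 := by
      refine image_eq_zero_of_notMem_tsupport fun h => ?_
      have hlt : ‖z‖ < M := mem_ball_zero_iff.1 (hball (.inl h))
      exact (hz.symm.trans_le (norm_le_pi_norm z i)).not_gt hlt
    have hdiv_zero (z : Fin (n + 1) → ℝ) (hz : z ∉ Set.Icc (fun _ => -M) fun _ => M) :
        divergence F z = 0 := by
      refine image_eq_zero_of_notMem_tsupport fun h => hz ?_
      have hlt : ‖z‖ < M := mem_ball_zero_iff.1 (hball (.inr h))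
      have hcoord (i) : |z i| ≤ M := (norm_le_pi_norm z i).trans hlt.le
      exact ⟨fun i => (abs_le.1 (hcoord i)).1, fun i => (abs_le.1 (hcoord i)).2⟩
    rw [← setIntegral_eq_integral_of_forall_compl_eq_zero hdiv_zero]
    simp only [funext (divergence_eq_sum_fderiv_single F)] at hdiv ⊢
    rw [integral_divergence_of_hasFDerivAt_off_countable (fun _ => -M) (fun _ => M)
      (fun _ => by simpa using hM.le) F (fderiv ℝ F) ∅ Set.countable_empty
      hF.continuous.continuousOn (fun z _ => (hF z).hasFDerivAt) hdiv.integrableOn]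
    refine Finset.sum_eq_zero fun i _ => ?_
    simp [hF_zero _ i, abs_of_pos hM]

variable {E : Type*} [NormedAddCommGroup E] [NormedSpace ℝ E] [FiniteDimensional ℝ E]
  [MeasurableSpace E] [BorelSpace E] {μ : Measure E} [μ.IsAddHaarMeasure]

theorem integral_divergence_eq_zero_of_hasCompactSupport {F : E → E} (hF : Differentiable ℝ F)
    (hsupp : HasCompactSupport F) (hdiv : Integrable (divergence F) μ) :
    ∫ z, divergence F z ∂μ = 0 := by
  let e : E ≃L[ℝ] (Fin (Module.finrank ℝ E) → ℝ) := .ofFinrankEq (by simp)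
  let G := fun w => e (F (e.symm w))
  have hG : Differentiable ℝ G := e.differentiable.comp (hF.comp e.symm.differentiable)
  have hG_supp : HasCompactSupport G :=
    (hsupp.comp_homeomorph e.symm.toHomeomorph).comp_left (map_zero e)
  have he : MeasurableEmbedding e := e.toHomeomorph.measurableEmbedding
  have : (μ.map e).IsAddHaarMeasure := e.isAddHaarMeasure_map μ
  have hG_div : Integrable (divergence G) (μ.map e) := by
    rw [he.integrable_map_iff]
    simpa only [Function.comp_def, G, divergence_conj, e.symm_apply_apply] using hdiv
  have hG_div_volume : Integrable (divergence G) := by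
    rw [Measure.isAddLeftInvariant_eq_smul volume (μ.map e)]
    exact hG_div.smul_measure_nnreal
  calc ∫ z, divergence F z ∂μ
    _ = ∫ w, divergence G w ∂(μ.map e) := by
      simp only [he.integral_map, G, divergence_conj, e.symm_apply_apply]
    _ = 0 := by
      rw [Measure.isAddLeftInvariant_eq_smul (μ.map e) volume, integral_smul_nnreal_measure,
        integral_divergence_eq_zero_of_hasCompactSupport_pi hG hG_supp hG_div_volume, smul_zero]

theorem integral_divergence_eq_zero_of_cutoff {F : E → E} {g : ℕ → E → ℝ} {h : E → ℝ}
    (hF : Differentiable ℝ F) (hdiv : Integrable (divergence F) μ)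
    (hg : ∀ m, Differentiable ℝ (g m)) (hg_supp : ∀ m, HasCompactSupport (g m))
    (hg_le : ∀ m z, ‖g m z‖ ≤ 1) (hg_lim : ∀ z, Tendsto (fun m => g m z) atTop (𝓝 1))
    (hh : Integrable h μ) (hg'_le : ∀ m z, ‖fderiv ℝ (g m) z (F z)‖ ≤ h z)
    (hg'_lim : ∀ z, Tendsto (fun m => fderiv ℝ (g m) z (F z)) atTop (𝓝 0)) :
    ∫ z, divergence F z ∂μ = 0 := by
  let G : ℕ → E → E := fun m z => g m z • F z
  have hG_div (m z) : divergence (G m) z = g m z * divergence F z + fderiv ℝ (g m) z (F z) :=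
    divergence_smul (hg m z) (hF z)
  have hG_meas (m) : AEStronglyMeasurable (divergence (G m)) μ :=
    (measurable_divergence (G m)).aestronglyMeasurable
  have hG_le (m z) : ‖divergence (G m) z‖ ≤ ‖divergence F z‖ + h z := by
    calc ‖divergence (G m) z‖
      _ ≤ ‖g m z‖ * ‖divergence F z‖ + ‖fderiv ℝ (g m) z (F z)‖ := by
        rw [hG_div, ← norm_mul]
        exact norm_add_le _ _
      _ ≤ ‖divergence F z‖ + h z :=
        add_le_add (mul_le_of_le_one_left (norm_nonneg _) (hg_le m z)) (hg'_le m z)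
  have hbound : Integrable (fun z => ‖divergence F z‖ + h z) μ := hdiv.norm.add hh
  have hG_zero (m) : ∫ z, divergence (G m) z ∂μ = 0 :=
    integral_divergence_eq_zero_of_hasCompactSupport ((hg m).smul hF) (hg_supp m).smul_right
      (hbound.mono' (hG_meas m) (.of_forall (hG_le m)))
  have hG_lim (z) : Tendsto (fun m => divergence (G m) z) atTop (𝓝 (divergence F z)) := by
    simpa [hG_div] using ((hg_lim z).mul_const (divergence F z)).add (hg'_lim z)
  have hlim := tendsto_integral_of_dominated_convergence _ hG_meas hbound
    (fun m => .of_forall (hG_le m)) (.of_forall hG_lim)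
  simp only [hG_zero] at hlim
  exact tendsto_nhds_unique hlim tendsto_const_nhds

theorem integral_divergence_eq_zero_of_integrable_fderiv_apply {F : E → E} {q : E → ℝ}
    (hF : Differentiable ℝ F) (hdiv : Integrable (divergence F) μ) (hq : Differentiable ℝ q)
    (hq_proper : Tendsto q (cocompact E) (cocompact ℝ))
    (hqF : Integrable (fun z => fderiv ℝ q z (F z)) μ) :
    ∫ z, divergence F z ∂μ = 0 := by
  let χ : ContDiffBump (0 : ℝ) := ⟨1, 2, one_pos, one_lt_two⟩
  have hχ : ContDiff ℝ 1 χ := χ.contDiff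
  have hχ_diff : Differentiable ℝ χ := hχ.differentiable one_ne_zero
  have hχ_zero : χ 0 = 1 := χ.one_of_mem_closedBall (by simp [χ])
  have hχ' : Continuous (deriv χ) := hχ.continuous_deriv le_rfl
  obtain ⟨C, hC⟩ := χ.hasCompactSupport.deriv.exists_bound_of_continuous hχ'
  let r : ℕ → ℝ := fun m => 1 / (m + 1)
  have hr_pos (m) : 0 < r m := Nat.one_div_pos_of_nat
  have hr_le (m) : r m ≤ 1 := by
    simpa [r] using Nat.one_div_le_one_div (α := ℝ) (Nat.zero_le m)
  have hr_lim : Tendsto r atTop (𝓝 0) := tendsto_one_div_add_atTop_nhds_zero_nat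
  have hrq_proper (m) : Tendsto (fun z => r m * q z) (cocompact E) (cocompact ℝ) :=
    (Homeomorph.mulLeft₀ (r m) (hr_pos m).ne').isClosedEmbedding.tendsto_cocompact.comp hq_proper
  have hfderiv (m z) : fderiv ℝ (fun w => χ (r m * q w)) z (F z)
      = r m * deriv χ (r m * q z) * fderiv ℝ q z (F z) :=
    fderiv_comp_const_mul_apply (hχ_diff _) (hq z) (F z)
  refine integral_divergence_eq_zero_of_cutoff (g := fun m z => χ (r m * q z)) hF hdiv
    (fun m => hχ_diff.comp (hq.const_mul (r m)))
    (fun m => hasCompactSupport_comp_of_tendsto_cocompact χ.hasCompactSupport (hrq_proper m))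
    (fun m z => ?_) (fun z => ?_) (hqF.norm.const_mul C) (fun m z => ?_) (fun z => ?_)
  · rw [Real.norm_of_nonneg χ.nonneg]
    exact χ.le_one
  · have hcont : Continuous fun t : ℝ => χ (t * q z) := hχ.continuous.comp (by fun_prop)
    simpa [hχ_zero, Function.comp_def] using (hcont.tendsto 0).comp hr_lim
  · rw [hfderiv, norm_mul, norm_mul, Real.norm_of_nonneg (hr_pos m).le]
    gcongr
    exact (mul_le_of_le_one_left (norm_nonneg _) (hr_le m)).trans (hC _)
  · have hcont : Continuous fun t : ℝ => t * deriv χ (t * q z) * fderiv ℝ q z (F z) := by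
      fun_prop
    simpa [hfderiv, Function.comp_def] using (hcont.tendsto 0).comp hr_lim

theorem integral_fderiv_apply_eq_integral_divergence_withDensity_exp_neg {V : E → ℝ} {F : E → E}
    (hV : Differentiable ℝ V) (hV_proper : Tendsto V (cocompact E) (cocompact ℝ))
    (hF : Differentiable ℝ F)
    (hVF : Integrable (fun z => fderiv ℝ V z (F z))
      (μ.withDensity fun z => ENNReal.ofReal (Real.exp (-V z))))
    (hdiv : Integrable (divergence F) (μ.withDensity fun z => ENNReal.ofReal (Real.exp (-V z)))) :
    ∫ z, fderiv ℝ V z (F z) ∂(μ.withDensity fun z => ENNReal.ofReal (Real.exp (-V z)))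
      = ∫ z, divergence F z ∂(μ.withDensity fun z => ENNReal.ofReal (Real.exp (-V z))) := by
  have hρ : Measurable fun z => ENNReal.ofReal (Real.exp (-V z)) :=
    (Real.continuous_exp.comp hV.continuous.neg).measurable.ennreal_ofReal
  have hρ_lt : ∀ᵐ z ∂μ, ENNReal.ofReal (Real.exp (-V z)) < ⊤ := by simp
  rw [integrable_withDensity_iff_integrable_smul' hρ hρ_lt] at hVF hdiv
  rw [integral_withDensity_eq_integral_toReal_smul hρ hρ_lt,
    integral_withDensity_eq_integral_toReal_smul hρ hρ_lt]
  simp only [ENNReal.toReal_ofReal (Real.exp_nonneg _), smul_eq_mul] at hVF hdiv ⊢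
  have hexp : Differentiable ℝ fun z => Real.exp (-V z) := hV.neg.exp
  have hdiv_smul : divergence (fun z => Real.exp (-V z) • F z) = fun z =>
      Real.exp (-V z) * divergence F z - Real.exp (-V z) * fderiv ℝ V z (F z) := by
    funext z
    rw [divergence_smul (hexp z) (hF z), fderiv_exp (hV z).fun_neg, fderiv_fun_neg]
    simp [sub_eq_add_neg]
  have hzero : ∫ z, divergence (fun z => Real.exp (-V z) • F z) z ∂μ = 0 :=
    integral_divergence_eq_zero_of_integrable_fderiv_apply (hexp.smul hF)
      (hdiv_smul ▸ hdiv.sub hVF) hV hV_proper (by simpa using hVF)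
  rw [hdiv_smul, integral_sub hdiv hVF] at hzero
  exact (sub_eq_zero.1 hzero).symm

end DivergenceTheorem

theorem tendsto_sum_cocompact_atTop {ι : Type*} [Fintype ι] {X : ι → Type*}
    [∀ i, TopologicalSpace (X i)] {φ : ∀ i, X i → ℝ} (hφ_nonneg : ∀ i t, 0 ≤ φ i t)
    (hφ : ∀ i, Tendsto (φ i) (cocompact (X i)) atTop) :
    Tendsto (fun z : ∀ i, X i => ∑ i, φ i (z i)) (cocompact (∀ i, X i)) atTop := by
  rw [← coprodᵢ_cocompact]
  refine tendsto_iSup.2 fun i => tendsto_atTop_mono (fun z => ?_) ((hφ i).comp tendsto_comap)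
  exact Finset.single_le_sum (f := fun i => φ i (z i)) (fun j _ => hφ_nonneg j (z j))
    (Finset.mem_univ i)

theorem pi_withDensity_ofReal {ι : Type*} [Fintype ι] {X : ι → Type*}
    [∀ i, MeasurableSpace (X i)] {μ : ∀ i, Measure (X i)} [∀ i, SigmaFinite (μ i)]
    {ρ : ∀ i, X i → ℝ} (hρ_nonneg : ∀ i t, 0 ≤ ρ i t) (hρ : ∀ i, Integrable (ρ i) (μ i)) :
    Measure.pi (fun i => (μ i).withDensity fun t => ENNReal.ofReal (ρ i t))
      = (Measure.pi μ).withDensity fun z => ENNReal.ofReal (∏ i, ρ i (z i)) := by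
  have : ∀ i, IsFiniteMeasure ((μ i).withDensity fun t => ENNReal.ofReal (ρ i t)) :=
    fun i => isFiniteMeasure_withDensity_ofReal (hρ i).2
  refine Measure.pi_eq fun s hs => ?_
  rw [withDensity_apply _ (MeasurableSet.univ_pi hs), Measure.restrict_pi_pi,
    ← ofReal_integral_eq_lintegral_ofReal
      (Integrable.fintype_prod_dep fun i => (hρ i).restrict)
      (.of_forall fun z => Finset.prod_nonneg fun i _ => hρ_nonneg i (z i)),
    integral_fintype_prod_eq_prod,
    ENNReal.ofReal_prod_of_nonneg fun i _ => integral_nonneg (hρ_nonneg i)]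
  refine Finset.prod_congr rfl fun i _ => ?_
  rw [withDensity_apply _ (hs i), ofReal_integral_eq_lintegral_ofReal (hρ i).restrict
    (.of_forall (hρ_nonneg i))]

section Gaussian

variable {ι : Type*} [Fintype ι] {m : ι → ℝ} {v : ι → ℝ≥0}

/-- The negative log-density of the product of the Gaussian measures `gaussianReal (m i) (v i)`,
meaningful when no `v i` vanishes. The normalizing constants are kept inside the potential, so that
the density is exactly `exp (-gaussianPotential m v z)`. -/
noncomputable def gaussianPotential (m : ι → ℝ) (v : ι → ℝ≥0) (z : ι → ℝ) : ℝ :=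
  ∑ i, ((z i - m i) ^ 2 / (2 * v i) + Real.log √(2 * Real.pi * v i))

theorem exp_neg_gaussianPotential (hv : ∀ i, v i ≠ 0) (z : ι → ℝ) :
    Real.exp (-gaussianPotential m v z) = ∏ i, gaussianPDFReal (m i) (v i) (z i) := by
  rw [gaussianPotential, ← Finset.sum_neg_distrib, Real.exp_sum]
  refine Finset.prod_congr rfl fun i _ => ?_
  have hvi : (0 : ℝ) < v i := NNReal.coe_pos.2 (hv i).bot_lt
  rw [neg_add_rev, Real.exp_add, Real.exp_neg, Real.exp_log (by positivity), gaussianPDFReal,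
    neg_div]

theorem pi_gaussianReal_eq_withDensity (hv : ∀ i, v i ≠ 0) :
    Measure.pi (fun i => gaussianReal (m i) (v i))
      = volume.withDensity fun z => ENNReal.ofReal (Real.exp (-gaussianPotential m v z)) := by
  simp only [exp_neg_gaussianPotential hv, volume_pi,
    fun i => gaussianReal_of_var_ne_zero (m i) (hv i)]
  exact pi_withDensity_ofReal (fun i => gaussianPDFReal_nonneg (m i) (v i))
    fun i => integrable_gaussianPDFReal (m i) (v i)

theorem hasFDerivAt_gaussianPotential (m : ι → ℝ) (v : ι → ℝ≥0) (z : ι → ℝ) :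
    HasFDerivAt (gaussianPotential m v)
      (∑ i, ((z i - m i) / v i) • ContinuousLinearMap.proj (R := ℝ) (φ := fun _ : ι => ℝ) i) z := by
  refine HasFDerivAt.fun_sum fun i _ => ?_
  have hquad : HasDerivAt (fun t : ℝ => (t - m i) ^ 2 / (2 * v i)
      + Real.log √(2 * Real.pi * v i)) ((z i - m i) / v i) (z i) := by
    refine (((((hasDerivAt_id (z i)).sub_const (m i)).fun_pow 2).div_const _).add_const
      _).congr_deriv ?_
    simp only [id, Nat.cast_ofNat]
    ring
  exact hquad.comp_hasFDerivAt (f := fun z : ι → ℝ => z i) z (hasFDerivAt_apply i z)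

theorem tendsto_gaussianPotential_cocompact_atTop (hv : ∀ i, v i ≠ 0) :
    Tendsto (gaussianPotential m v) (cocompact (ι → ℝ)) atTop := by
  have hquad (i) : Tendsto (fun t => (t - m i) ^ 2 / (2 * v i)) (cocompact ℝ) atTop := by
    have hvi : (0 : ℝ) < 2 * v i := mul_pos two_pos (NNReal.coe_pos.2 (hv i).bot_lt)
    have hdist := tendsto_dist_right_cocompact_atTop (m i)
    simpa only [Function.comp_def, Real.dist_eq, sq_abs]
      using ((tendsto_pow_atTop two_ne_zero).comp hdist).atTop_div_const hvi
  unfold gaussianPotential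
  simp only [Finset.sum_add_distrib]
  exact tendsto_atTop_add_const_right _ _
    (tendsto_sum_cocompact_atTop (fun i t => by positivity) hquad)

theorem integral_sum_sub_mul_pi_gaussianReal [DecidableEq ι] (hv : ∀ i, v i ≠ 0)
    {f : (ι → ℝ) → ι → ℝ} (hf : Differentiable ℝ f)
    (hint_sub : Integrable (fun z => ∑ k, (z k - m k) * f z k)
      (Measure.pi fun i => gaussianReal (m i) (v i)))
    (hint_fderiv : Integrable (fun z => ∑ k, v k * fderiv ℝ f z (Pi.single k 1) k)
      (Measure.pi fun i => gaussianReal (m i) (v i))) :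
    ∫ z, ∑ k, (z k - m k) * f z k ∂(Measure.pi fun i => gaussianReal (m i) (v i))
      = ∫ z, ∑ k, v k * fderiv ℝ f z (Pi.single k 1) k
          ∂(Measure.pi fun i => gaussianReal (m i) (v i)) := by
  let V := gaussianPotential m v
  let F : (ι → ℝ) → ι → ℝ := fun z => (fun k => (v k : ℝ)) * f z
  have hV (z) := hasFDerivAt_gaussianPotential m v z
  have hVF (z) : fderiv ℝ V z (F z) = ∑ k, (z k - m k) * f z k := by
    rw [(hV z).fderiv]
    simp only [F, sum_apply, smul_apply, ContinuousLinearMap.proj_apply, Pi.mul_apply,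
      smul_eq_mul]
    refine Finset.sum_congr rfl fun k _ => ?_
    have hvk : (v k : ℝ) ≠ 0 := NNReal.coe_ne_zero.2 (hv k)
    field_simp
  have hdivF (z) : divergence F z = ∑ k, v k * fderiv ℝ f z (Pi.single k 1) k := by
    simp [F, divergence_eq_sum_fderiv_single, fderiv_const_mul (hf z)]
  rw [pi_gaussianReal_eq_withDensity hv] at hint_sub hint_fderiv ⊢
  simp only [← hVF, ← hdivF] at hint_sub hint_fderiv ⊢
  exact integral_fderiv_apply_eq_integral_divergence_withDensity_exp_neg
    (fun z => (hV z).differentiableAt)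
    ((tendsto_gaussianPotential_cocompact_atTop hv).mono_right atTop_le_cocompact)
    (hf.const_mul _) hint_sub hint_fderiv

end Gaussian

section SteinIdentity

variable {Ω ι : Type*} [MeasurableSpace Ω] {P : Measure Ω} [Fintype ι]

theorem hasLaw_const_add_pi_gaussianReal {w : Ω → ι → ℝ} {v : ι → ℝ≥0} (x : ι → ℝ)
    (hw_indep : iIndepFun (fun i ω => w ω i) P)
    (hw_law : ∀ i, HasLaw (fun ω => w ω i) (gaussianReal 0 (v i)) P) :
    HasLaw (fun ω => x + w ω) (Measure.pi fun i => gaussianReal (x i) (v i)) P := by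
  refine iIndepFun.hasLaw_pi (X := fun i ω => x i + w ω i) (fun i => ?_)
    (hw_indep.comp (fun i t => x i + t) fun i => measurable_const_add (x i))
  simpa only [zero_add] using gaussianReal_const_add (hw_law i) (x i)

theorem integrable_comp_iff_of_hasLaw {X E : Type*} [MeasurableSpace X] [NormedAddCommGroup E]
    {ν : Measure X} {Y : Ω → X} {g : X → E} (hY : HasLaw Y ν P)
    (hg : AEStronglyMeasurable g ν) : Integrable (fun ω => g (Y ω)) P ↔ Integrable g ν := by
  rw [← hY.map_eq] at hg ⊢
  exact (integrable_map_measure hg hY.aemeasurable).symm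

theorem multidim_stein_identity_general [DecidableEq ι] {x : ι → ℝ} {v : ι → ℝ≥0}
    (hv : ∀ i, v i ≠ 0) {y : Ω → ι → ℝ}
    (hy : HasLaw y (Measure.pi fun i => gaussianReal (x i) (v i)) P)
    {f : (ι → ℝ) → ι → ℝ} (hf : Differentiable ℝ f)
    (hint₁ : Integrable (fun ω => ∑ k, x k * f (y ω) k) P)
    (hint₂ : Integrable (fun ω => ∑ k, y ω k * f (y ω) k) P)
    (hint₃ : Integrable (fun ω => ∑ k, v k * fderiv ℝ f (y ω) (Pi.single k 1) k) P) :
    ∫ ω, ∑ k, x k * f (y ω) k ∂P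
      = ∫ ω, ∑ k, y ω k * f (y ω) k ∂P
        - ∫ ω, ∑ k, v k * fderiv ℝ f (y ω) (Pi.single k 1) k ∂P := by
  let score : (ι → ℝ) → ℝ := fun z => ∑ k, (z k - x k) * f z k
  let div : (ι → ℝ) → ℝ := fun z => ∑ k, v k * fderiv ℝ f z (Pi.single k 1) k
  let γ := Measure.pi fun i => gaussianReal (x i) (v i)
  have hscore : (fun ω => score (y ω)) =
      fun ω => ∑ k, y ω k * f (y ω) k - ∑ k, x k * f (y ω) k := by
    simp only [score, sub_mul, Finset.sum_sub_distrib]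
  have hscore_int : Integrable (fun ω => score (y ω)) P := hscore ▸ hint₂.sub hint₁
  have hscore_meas : AEStronglyMeasurable score γ := by
    have := hf.continuous
    exact Continuous.aestronglyMeasurable (by fun_prop)
  have hdiv_meas : AEStronglyMeasurable div γ :=
    (Finset.measurable_sum _ fun k _ => ((measurable_pi_apply k).comp
      (measurable_fderiv_apply_const ℝ f (Pi.single k 1))).const_mul _).aestronglyMeasurable
  have hstein : ∫ ω, score (y ω) ∂P = ∫ ω, div (y ω) ∂P := by
    calc ∫ ω, score (y ω) ∂P
      _ = ∫ z, score z ∂γ := hy.integral_comp hscore_meas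
      _ = ∫ z, div z ∂γ := integral_sum_sub_mul_pi_gaussianReal hv hf
        ((integrable_comp_iff_of_hasLaw hy hscore_meas).1 hscore_int)
        ((integrable_comp_iff_of_hasLaw hy hdiv_meas).1 hint₃)
      _ = ∫ ω, div (y ω) ∂P := (hy.integral_comp hdiv_meas).symm
  rw [hscore, integral_sub hint₂ hint₁] at hstein
  linarith

end SteinIdentity

/-- **Multidimensional Stein identity.** Let `y = x + w` where `x ∈ ℝᴺ` is deterministic and the
components of `w` are independent centered Gaussians with variance `σ²`. For a differentiable
`f : ℝᴺ → ℝᴺ` (with the stated integrability assumptions),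
`E[⟨x, f(y)⟩] = E[⟨y, f(y)⟩] − σ² E[∑ₖ ∂fₖ/∂yₖ (y)]`. -/
theorem multidim_stein_identity
    {Ω : Type*} [MeasurableSpace Ω] (P : Measure Ω) [IsProbabilityMeasure P]
    (N : ℕ) (hN : 0 < N) (σ : ℝ) (hσ : 0 < σ)
    (x : Fin N → ℝ) (w : Ω → Fin N → ℝ)
    (hw_meas : ∀ i, Measurable fun ω => w ω i)
    (hw_indep : iIndepFun (fun i ω => w ω i) P)
    (hw_gauss : ∀ i, Measure.map (fun ω => w ω i) P = gaussianReal 0 ⟨σ ^ 2, sq_nonneg σ⟩)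
    (y : Ω → Fin N → ℝ) (hy : ∀ ω, y ω = x + w ω)
    (f : (Fin N → ℝ) → (Fin N → ℝ)) (hf : Differentiable ℝ f)
    (hint₁ : Integrable (fun ω => ∑ k, x k * f (y ω) k) P)
    (hint₂ : Integrable (fun ω => ∑ k, y ω k * f (y ω) k) P)
    (hint₃ : Integrable (fun ω => ∑ k, fderiv ℝ f (y ω) (Pi.single k 1) k) P) :
    ∫ ω, ∑ k, x k * f (y ω) k ∂P
      = ∫ ω, ∑ k, y ω k * f (y ω) k ∂P
        - σ ^ 2 * ∫ ω, ∑ k, fderiv ℝ f (y ω) (Pi.single k 1) k ∂P := by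
  have hy_law := (hasLaw_const_add_pi_gaussianReal x hw_indep
    fun i => ⟨(hw_meas i).aemeasurable, hw_gauss i⟩).congr (.of_forall hy)
  have hvar : (⟨σ ^ 2, sq_nonneg σ⟩ : ℝ≥0) ≠ 0 := NNReal.coe_ne_zero.1 (pow_pos hσ 2).ne'
  have hint_var : Integrable (fun ω => ∑ k, σ ^ 2 * fderiv ℝ f (y ω) (Pi.single k 1) k) P := by
    simpa only [Finset.mul_sum] using hint₃.const_mul (σ ^ 2)
  simp only [← integral_const_mul, Finset.mul_sum]
  exact multidim_stein_identity_general (fun _ => hvar) hy_law hf hint₁ hint₂ hint_var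
end

section
/- Distribution-free unbiased estimate of the cross term: Let N be a positive integer, let x ∈ ℝ^N be a fixed (deterministic) vector, and let w : Ω → ℝ^N be a random vector whose components are square-integrable with zero mean, variance σ², and mutually uncorrelated (E[w_i w_j] = 0 for i ≠ j). Set y = x + w and let H be an N×N real matrix all of whose diagonal entries equal h₀. Then E[⟨x, Hy⟩] = E[⟨y, Hy⟩] − Nσ² h₀; equivalently, the random variable ⟨y, Hy⟩ − Nσ² h₀ is an unbiased estimator of E[⟨x, Hy⟩]. -/
open MeasureTheory

/-! For random vectors `u`, `v` one has `E⟨u, Hv⟩ = tr (H E[v uᵀ])`, and the second-moment matrix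
`E[v uᵀ]` is biadditive. If the signal `x` is orthogonal to the noise `w` and `y = x + w`, then
`E[y yᵀ] = E[y xᵀ] + E[w wᵀ]`, so `E⟨y, Hy⟩` exceeds `E⟨x, Hy⟩` by `tr (H E[w wᵀ])`. For white
noise, `E[w wᵀ] = σ² I`, and this bias is `σ² tr H`. -/

open scoped Matrix

section CrossMoment

variable {Ω m n : Type*} [MeasurableSpace Ω] {P : Measure Ω}

/-- The matrix `E[u vᵀ]` of mixed second moments of two random vectors, not centred at the means.
An entry whose integrand fails to be integrable is `0`. -/
noncomputable def crossMoment (P : Measure Ω) (u : Ω → m → ℝ) (v : Ω → n → ℝ) : Matrix m n ℝ :=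
  Matrix.of fun i j => ∫ ω, u ω i * v ω j ∂P

theorem crossMoment_apply (u : Ω → m → ℝ) (v : Ω → n → ℝ) (i : m) (j : n) :
    crossMoment P u v i j = ∫ ω, u ω i * v ω j ∂P :=
  rfl

theorem crossMoment_add_left {u u' : Ω → m → ℝ} {v : Ω → n → ℝ}
    (hu : ∀ i, MemLp (fun ω => u ω i) 2 P) (hu' : ∀ i, MemLp (fun ω => u' ω i) 2 P)
    (hv : ∀ j, MemLp (fun ω => v ω j) 2 P) :
    crossMoment P (fun ω => u ω + u' ω) v = crossMoment P u v + crossMoment P u' v := by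
  ext i j
  simp only [crossMoment_apply, Matrix.add_apply, Pi.add_apply, add_mul]
  exact integral_add ((hu i).integrable_mul (hv j)) ((hu' i).integrable_mul (hv j))

theorem crossMoment_add_right {u : Ω → m → ℝ} {v v' : Ω → n → ℝ}
    (hu : ∀ i, MemLp (fun ω => u ω i) 2 P) (hv : ∀ j, MemLp (fun ω => v ω j) 2 P)
    (hv' : ∀ j, MemLp (fun ω => v' ω j) 2 P) :
    crossMoment P u (fun ω => v ω + v' ω) = crossMoment P u v + crossMoment P u v' := by
  ext i j
  simp only [crossMoment_apply, Matrix.add_apply, Pi.add_apply, mul_add]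
  exact integral_add ((hu i).integrable_mul (hv j)) ((hu i).integrable_mul (hv' j))

theorem crossMoment_const_left (a : m → ℝ) (v : Ω → n → ℝ) :
    crossMoment P (fun _ => a) v = Matrix.vecMulVec a fun j => ∫ ω, v ω j ∂P := by
  ext i j
  exact integral_const_mul (a i) _

theorem crossMoment_self_eq_smul_one [DecidableEq n] {w : Ω → n → ℝ} {c : ℝ}
    (hw_var : ∀ i, ∫ ω, w ω i ^ 2 ∂P = c)
    (hw_uncorr : ∀ i j, i ≠ j → ∫ ω, w ω i * w ω j ∂P = 0) :
    crossMoment P w w = c • 1 := by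
  ext i j
  rcases eq_or_ne i j with rfl | hij
  · simp [crossMoment_apply, ← hw_var i, sq]
  · simp [crossMoment_apply, hw_uncorr i j hij, hij]

theorem integral_dotProduct_mulVec [Fintype m] [Fintype n] {u : Ω → m → ℝ} {v : Ω → n → ℝ}
    (hu : ∀ i, MemLp (fun ω => u ω i) 2 P) (hv : ∀ j, MemLp (fun ω => v ω j) 2 P)
    (H : Matrix m n ℝ) :
    ∫ ω, u ω ⬝ᵥ H *ᵥ v ω ∂P = (H * crossMoment P v u).trace := by
  have integrable_term (i : m) (j : n) : Integrable (fun ω => H i j * (v ω j * u ω i)) P :=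
    ((hv j).integrable_mul (hu i)).const_mul (H i j)
  calc ∫ ω, u ω ⬝ᵥ H *ᵥ v ω ∂P
      = ∫ ω, ∑ i, ∑ j, H i j * (v ω j * u ω i) ∂P := by
        simp only [dotProduct, Matrix.mulVec, Finset.mul_sum, mul_comm, mul_left_comm]
    _ = ∑ i, ∑ j, ∫ ω, H i j * (v ω j * u ω i) ∂P := by
        rw [integral_finsetSum _ fun i _ => integrable_finsetSum _ fun j _ => integrable_term i j]
        exact Finset.sum_congr rfl fun i _ => integral_finsetSum _ fun j _ => integrable_term i j
    _ = (H * crossMoment P v u).trace := by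
        simp only [integral_const_mul, Matrix.trace, Matrix.diag_apply, Matrix.mul_apply,
          crossMoment_apply]

end CrossMoment

theorem crossterm_unbiased_estimate_general {Ω n : Type*} [MeasurableSpace Ω] [Fintype n]
    {P : Measure Ω} {x w : Ω → n → ℝ} (hx : ∀ i, MemLp (fun ω => x ω i) 2 P)
    (hw : ∀ i, MemLp (fun ω => w ω i) 2 P) (hxw : crossMoment P x w = 0) (H : Matrix n n ℝ) :
    ∫ ω, x ω ⬝ᵥ H *ᵥ (x ω + w ω) ∂P
      = ∫ ω, (x ω + w ω) ⬝ᵥ H *ᵥ (x ω + w ω) ∂P - (H * crossMoment P w w).trace := by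
  have hy (i : n) : MemLp (fun ω => (x ω + w ω) i) 2 P := (hx i).add (hw i)
  have noise_moment : crossMoment P (fun ω => x ω + w ω) w = crossMoment P w w := by
    rw [crossMoment_add_left hx hw hw, hxw, zero_add]
  rw [integral_dotProduct_mulVec hx hy, integral_dotProduct_mulVec hy hy,
    crossMoment_add_right hy hx hw, noise_moment, Matrix.mul_add, Matrix.trace_add,
    add_sub_cancel_right]

/-- **Distribution-free unbiased estimate of the cross term.** With `y = x + w`, `x`
deterministic, `w` having square-integrable components with zero mean, variance `σ²`, and
mutually uncorrelated, and `H` an `N × N` matrix with all diagonal entries equal to `h₀`,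
`E[⟨x, Hy⟩] = E[⟨y, Hy⟩] − N σ² h₀`. -/
theorem crossterm_unbiased_estimate
    {Ω : Type*} [MeasurableSpace Ω] (P : Measure Ω) [IsProbabilityMeasure P]
    (N : ℕ) (hN : 0 < N) (σ : ℝ)
    (x : Fin N → ℝ) (w : Ω → Fin N → ℝ)
    (hw_sq : ∀ i, MemLp (fun ω => w ω i) 2 P)
    (hw_mean : ∀ i, ∫ ω, w ω i ∂P = 0)
    (hw_var : ∀ i, ∫ ω, (w ω i) ^ 2 ∂P = σ ^ 2)
    (hw_uncorr : ∀ i j, i ≠ j → ∫ ω, w ω i * w ω j ∂P = 0)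
    (y : Ω → Fin N → ℝ) (hy : ∀ ω, y ω = x + w ω)
    (H : Matrix (Fin N) (Fin N) ℝ) (h₀ : ℝ) (hH : ∀ i, H i i = h₀) :
    ∫ ω, ∑ i, x i * H.mulVec (y ω) i ∂P
      = ∫ ω, ∑ i, y ω i * H.mulVec (y ω) i ∂P - N * σ ^ 2 * h₀ := by
  obtain rfl : y = fun ω => x + w ω := funext hy
  have signal_orthogonal : crossMoment P (fun _ => x) w = 0 := by
    simp [crossMoment_const_left, hw_mean, ← Pi.zero_def]
  have noise_bias : (H * crossMoment P w w).trace = N * σ ^ 2 * h₀ := by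
    simp [crossMoment_self_eq_smul_one hw_var hw_uncorr, Matrix.trace, hH, mul_assoc]
  rw [← noise_bias]
  exact crossterm_unbiased_estimate_general (fun i => memLp_const (x i)) hw_sq signal_orthogonal H
end

section
/- Proposition 1 (Stein-free unbiased risk estimate): Let y = x + w, where x ∈ ℝ^N is a fixed (deterministic) vector and w : Ω → ℝ^N is a random vector whose components are square-integrable with zero mean (E[w_i] = 0), variance σ² (E[w_i²] = σ²), and mutually uncorrelated (E[w_i w_j] = 0 for i ≠ j). Let H be an N×N real matrix all of whose diagonal entries equal h₀ (for instance, a Toeplitz operator built from a stable filter; its principal diagonal entry is h₀). Then the random variable Ĉ(y) = ‖Hy − y‖² + 2σ²N h₀ − Nσ² is an unbiased estimate of the mean-square error C = E[‖x − Hy‖²], i.e., E[‖Hy − y‖² + 2σ²N h₀ − Nσ²] = E[‖x − Hy‖²]. No distributional assumption on w (in particular, no Gaussianity) is required. -/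
open MeasureTheory

/-!
With `y = x + w`, expanding the square gives
`‖Hy - y‖² = ‖x - Hy‖² - 2⟨Hy, w⟩ + 2⟨x, w⟩ + ‖w‖²`. In expectation the term `⟨x, w⟩` vanishes
because the noise is centred, and `E⟨Hy, w⟩ = tr (H S)`, `E‖w‖² = tr S`, where `S` is the covariance
matrix of `w`. For white noise `S = σ² I`, so only the diagonal of `H` enters the correction.
-/

section

open Matrix

variable {Ω ι κ : Type*} {mΩ : MeasurableSpace Ω} {P : Measure Ω}

lemma integral_const_add_mul_of_integral_eq_zero {u v : Ω → ℝ} (hv : Integrable v P)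
    (huv : Integrable (fun ω => u ω * v ω) P) (hv_mean : ∫ ω, v ω ∂P = 0) (a : ℝ) :
    ∫ ω, (a + u ω) * v ω ∂P = ∫ ω, u ω * v ω ∂P := by
  simp only [add_mul]
  rw [integral_add (hv.const_mul a) huv, integral_const_mul, hv_mean, mul_zero, zero_add]

lemma integral_sq_sub_const_add_of_integral_eq_zero [IsFiniteMeasure P] {f v : Ω → ℝ}
    (hf : MemLp f 2 P) (hv : MemLp v 2 P) (hv_mean : ∫ ω, v ω ∂P = 0) (a : ℝ) :
    ∫ ω, (f ω - (a + v ω)) ^ 2 ∂P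
      = ∫ ω, (a - f ω) ^ 2 ∂P - 2 * ∫ ω, f ω * v ω ∂P + ∫ ω, v ω * v ω ∂P := by
  have hv_int : Integrable v P := hv.integrable one_le_two
  have hvv : Integrable (fun ω => v ω * v ω) P := hv.integrable_mul hv
  have hfv : Integrable (fun ω => 2 * (f ω * v ω)) P := (hf.integrable_mul hv).const_mul 2
  have herr : Integrable (fun ω => (a - f ω) ^ 2) P := ((memLp_const a).sub hf).integrable_sq
  have herr_sub : Integrable (fun ω => (a - f ω) ^ 2 - 2 * (f ω * v ω)) P := herr.sub hfv
  have hnoise : Integrable (fun ω => (2 * a + v ω) * v ω) P :=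
    ((memLp_const (2 * a)).add hv).integrable_mul hv
  calc ∫ ω, (f ω - (a + v ω)) ^ 2 ∂P
      = ∫ ω, ((a - f ω) ^ 2 - 2 * (f ω * v ω) + (2 * a + v ω) * v ω) ∂P := by
        congr with ω
        ring
    _ = ∫ ω, (a - f ω) ^ 2 ∂P - 2 * ∫ ω, f ω * v ω ∂P + ∫ ω, (2 * a + v ω) * v ω ∂P := by
        rw [integral_add herr_sub hnoise, integral_sub herr hfv, integral_const_mul]
    _ = _ := by rw [integral_const_add_mul_of_integral_eq_zero hv_int hvv hv_mean]

lemma integral_mul_eq_smul_one_apply [DecidableEq ι] {w : Ω → ι → ℝ} {c : ℝ}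
    (hw_var : ∀ i, ∫ ω, w ω i ^ 2 ∂P = c)
    (hw_uncorr : ∀ i j, i ≠ j → ∫ ω, w ω i * w ω j ∂P = 0) (i j : ι) :
    ∫ ω, w ω i * w ω j ∂P = (c • (1 : Matrix ι ι ℝ)) i j := by
  rcases eq_or_ne i j with rfl | hij
  · simp [← pow_two, hw_var]
  · simp [hw_uncorr i j hij, hij]

variable [Fintype ι]

lemma memLp_mulVec_apply {p : ENNReal} {z : Ω → ι → ℝ} (hz : ∀ j, MemLp (fun ω => z ω j) p P)
    (A : Matrix κ ι ℝ) (i : κ) : MemLp (fun ω => (A *ᵥ z ω) i) p P :=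
  memLp_finsetSum _ fun j _ => (hz j).const_mul (A i j)

lemma integral_mulVec_apply_mul {z : Ω → ι → ℝ} {v : Ω → ℝ}
    (hzv : ∀ j, Integrable (fun ω => z ω j * v ω) P) (A : Matrix κ ι ℝ) (i : κ) :
    ∫ ω, (A *ᵥ z ω) i * v ω ∂P = (A *ᵥ fun j => ∫ ω, z ω j * v ω ∂P) i := by
  simp only [mulVec, dotProduct, Finset.sum_mul, mul_assoc]
  rw [integral_finsetSum _ fun j _ => (hzv j).const_mul (A i j)]
  simp only [integral_const_mul]

lemma integral_mulVec_add_apply_mul {x : ι → ℝ} {w : Ω → ι → ℝ} {v : Ω → ℝ}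
    (hv : Integrable v P) (hv_mean : ∫ ω, v ω ∂P = 0)
    (hwv : ∀ j, Integrable (fun ω => w ω j * v ω) P) (A : Matrix κ ι ℝ) (i : κ) :
    ∫ ω, (A *ᵥ (x + w ω)) i * v ω ∂P = (A *ᵥ fun j => ∫ ω, w ω j * v ω ∂P) i := by
  have hxwv (j : ι) : Integrable (fun ω => (x + w ω) j * v ω) P := by
    simpa only [Pi.add_apply, add_mul] using (hv.const_mul (x j)).fun_add (hwv j)
  rw [integral_mulVec_apply_mul hxwv]
  simp only [Pi.add_apply, integral_const_add_mul_of_integral_eq_zero hv (hwv _) hv_mean]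

lemma integral_sum_sq_sub_add_of_integral_eq_zero [IsFiniteMeasure P] {x : ι → ℝ}
    {f w : Ω → ι → ℝ} (hf_sq : ∀ i, MemLp (fun ω => f ω i) 2 P)
    (hw_sq : ∀ i, MemLp (fun ω => w ω i) 2 P) (hw_mean : ∀ i, ∫ ω, w ω i ∂P = 0) :
    ∫ ω, ∑ i, (f ω i - (x + w ω) i) ^ 2 ∂P
      = ∫ ω, ∑ i, (x i - f ω i) ^ 2 ∂P - 2 * ∑ i, ∫ ω, f ω i * w ω i ∂P
        + ∑ i, ∫ ω, w ω i * w ω i ∂P := by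
  have hres (i : ι) : Integrable (fun ω => (f ω i - (x + w ω) i) ^ 2) P :=
    ((hf_sq i).sub ((memLp_const (x i)).add (hw_sq i))).integrable_sq
  have herr (i : ι) : Integrable (fun ω => (x i - f ω i) ^ 2) P :=
    ((memLp_const (x i)).sub (hf_sq i)).integrable_sq
  rw [integral_finsetSum _ fun i _ => hres i, integral_finsetSum _ fun i _ => herr i,
    Finset.mul_sum, ← Finset.sum_sub_distrib, ← Finset.sum_add_distrib]
  exact Finset.sum_congr rfl fun i _ =>
    integral_sq_sub_const_add_of_integral_eq_zero (hf_sq i) (hw_sq i) (hw_mean i) (x i)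

theorem stein_free_unbiased_risk_estimate_general [IsProbabilityMeasure P]
    {x : ι → ℝ} {w : Ω → ι → ℝ} (hw_sq : ∀ i, MemLp (fun ω => w ω i) 2 P)
    (hw_mean : ∀ i, ∫ ω, w ω i ∂P = 0) {S : Matrix ι ι ℝ}
    (hw_cov : ∀ i j, ∫ ω, w ω i * w ω j ∂P = S i j)
    {y : Ω → ι → ℝ} (hy : ∀ ω, y ω = x + w ω) (H : Matrix ι ι ℝ) :
    ∫ ω, (∑ i, ((H *ᵥ y ω) i - y ω i) ^ 2 + 2 * (H * S).trace - S.trace) ∂P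
      = ∫ ω, ∑ i, (x i - (H *ᵥ y ω) i) ^ 2 ∂P := by
  simp only [hy]
  have hy_sq (i : ι) : MemLp (fun ω => (x + w ω) i) 2 P := (memLp_const (x i)).add (hw_sq i)
  have hHy_sq := memLp_mulVec_apply hy_sq H
  have hcross (i : ι) : ∫ ω, (H *ᵥ (x + w ω)) i * w ω i ∂P = (H * S) i i := by
    rw [integral_mulVec_add_apply_mul ((hw_sq i).integrable one_le_two) (hw_mean i)
      fun j => (hw_sq j).integrable_mul (hw_sq i)]
    simp only [hw_cov, mulVec, dotProduct, mul_apply]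
  have hres : Integrable (fun ω => ∑ i, ((H *ᵥ (x + w ω)) i - (x + w ω) i) ^ 2) P :=
    integrable_finsetSum _ fun i _ => ((hHy_sq i).sub (hy_sq i)).integrable_sq
  rw [integral_sub (hres.fun_add (integrable_const _)) (integrable_const _),
    integral_add hres (integrable_const _),
    integral_sum_sq_sub_add_of_integral_eq_zero hHy_sq hw_sq hw_mean]
  simp only [hcross, hw_cov, trace, diag_apply, integral_const, probReal_univ, one_smul]
  ring

end

/-- **Proposition 1 (Stein-free unbiased risk estimate).** With `y = x + w`, `x ∈ ℝᴺ`
deterministic, `w` having square-integrable components with zero mean, variance `σ²`, and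
mutually uncorrelated, and `H` an `N × N` matrix all of whose diagonal entries equal `h₀`, the
random variable `Ĉ(y) = ‖Hy − y‖² + 2σ²N h₀ − Nσ²` is an unbiased estimate of the mean-square
error: `E[‖Hy − y‖² + 2σ²N h₀ − Nσ²] = E[‖x − Hy‖²]`. No distributional assumption on `w` is
required. -/
theorem stein_free_unbiased_risk_estimate
    {Ω : Type*} [MeasurableSpace Ω] (P : Measure Ω) [IsProbabilityMeasure P]
    (N : ℕ) (hN : 0 < N) (σ : ℝ)
    (x : Fin N → ℝ) (w : Ω → Fin N → ℝ)
    (hw_sq : ∀ i, MemLp (fun ω => w ω i) 2 P)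
    (hw_mean : ∀ i, ∫ ω, w ω i ∂P = 0)
    (hw_var : ∀ i, ∫ ω, (w ω i) ^ 2 ∂P = σ ^ 2)
    (hw_uncorr : ∀ i j, i ≠ j → ∫ ω, w ω i * w ω j ∂P = 0)
    (y : Ω → Fin N → ℝ) (hy : ∀ ω, y ω = x + w ω)
    (H : Matrix (Fin N) (Fin N) ℝ) (h₀ : ℝ) (hH : ∀ i, H i i = h₀) :
    ∫ ω, (∑ i, (H.mulVec (y ω) i - y ω i) ^ 2
        + 2 * σ ^ 2 * N * h₀ - N * σ ^ 2) ∂P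
      = ∫ ω, ∑ i, (x i - H.mulVec (y ω) i) ^ 2 ∂P := by
  simpa [Matrix.trace, hH, mul_assoc, mul_comm, mul_left_comm] using
    stein_free_unbiased_risk_estimate_general hw_sq hw_mean
      (integral_mul_eq_smul_one_apply hw_var hw_uncorr) hy H
end
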